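/- Let Z be a finite-dimensional real vector space and θ ∈ [0,1]. Then the interconnection structure D_c is a Dirac structure: D_c equals its orthogonal complement in (Z × Z × Z* × Z*) × (Z* × Z* × Z × Z) with respect to the symmetrized pairing ⟨⟨(F₁,E₁),(F₂,E₂)⟩⟩ := P_c(F₁,E₂) + P_c(F₂,E₁) associated with the power pairing P_c. -/

import Mathlib

/-- The interconnection structure `D_c`: the set of tuples
`((w_L, w_R, w*_L, w*_R), (y*_L, y*_R, y_L, y_R))` satisfying the defining relations
with parameter `θ`. -/
def interconnSet (θ : ℝ) {Z : Type*} [AddCommGroup Z] [Module ℝ Z] :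
    Set ((Z × Z × Module.Dual ℝ Z × Module.Dual ℝ Z) ×
         (Module.Dual ℝ Z × Module.Dual ℝ Z × Z × Z)) :=
  {x | x.1.1 = (θ - 1 / 2) • x.2.2.2.1 - θ • x.2.2.2.2
    ∧ x.1.2.2.1 = (1 / 2 - θ) • x.2.1 + (θ - 1) • x.2.2.1
    ∧ x.1.2.1 = (1 - θ) • x.2.2.2.1 + (θ - 1 / 2) • x.2.2.2.2
    ∧ x.1.2.2.2 = θ • x.2.1 + (1 / 2 - θ) • x.2.2.1}

/-- The interconnection structure is a Dirac structure: it equals its orthogonal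
complement with respect to the symmetrized pairing associated with the power pairing
`P_c((w_L,w_R,w*_L,w*_R),(y*_L,y*_R,y_L,y_R)) = y*_L(w_L) + w*_L(y_L) + y*_R(w_R)
+ w*_R(y_R)`. -/
theorem interconnection_is_dirac
    {Z : Type*} [AddCommGroup Z] [Module ℝ Z] [FiniteDimensional ℝ Z]
    (θ : ℝ) (hθ : θ ∈ Set.Icc (0 : ℝ) 1) :
    interconnSet θ (Z := Z) =
      {x | ∀ y ∈ interconnSet θ (Z := Z),
        (y.2.1 x.1.1 + x.1.2.2.1 y.2.2.2.1 + y.2.2.1 x.1.2.1 + x.1.2.2.2 y.2.2.2.2)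
        + (x.2.1 y.1.1 + y.1.2.2.1 x.2.2.2.1 + x.2.2.1 y.1.2.1 + y.1.2.2.2 x.2.2.2.2)
          = 0} := by
  ext ⟨⟨wL, wR, wL', wR'⟩, ⟨yL', yR', yL, yR⟩⟩
  constructor
  · rintro ⟨h₁, h₂, h₃, h₄⟩ ⟨⟨vL, vR, vL', vR'⟩, ⟨uL', uR', uL, uR⟩⟩ ⟨k₁, k₂, k₃, k₄⟩
    dsimp only at *
    subst h₁ h₂ h₃ h₄ k₁ k₂ k₃ k₄
    simp only [map_add, map_sub, map_smul, LinearMap.add_apply, LinearMap.smul_apply,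
      smul_eq_mul]
    ring
  · intro h
    -- Test orthogonality against the element of the structure with prescribed efforts.
    have key : ∀ (uL' uR' : Module.Dual ℝ Z) (uL uR : Z), _ := fun uL' uR' uL uR =>
      h ⟨⟨(θ - 1 / 2) • uL - θ • uR, (1 - θ) • uL + (θ - 1 / 2) • uR,
        (1 / 2 - θ) • uL' + (θ - 1) • uR', θ • uL' + (1 / 2 - θ) • uR'⟩,
        ⟨uL', uR', uL, uR⟩⟩ ⟨rfl, rfl, rfl, rfl⟩
    simp only [map_add, map_sub, map_smul, LinearMap.add_apply, LinearMap.smul_apply,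
      smul_eq_mul] at key
    refine ⟨?_, ?_, ?_, ?_⟩ <;> dsimp only
    · refine (Module.forall_dual_apply_eq_zero_iff ℝ _).1 (fun f => ?_) |> sub_eq_zero.1
      have := key f 0 0 0
      simp only [map_sub, map_smul, smul_eq_mul, map_zero, LinearMap.zero_apply] at this ⊢
      linarith
    · ext z
      have := key 0 0 z 0
      simp only [LinearMap.add_apply, LinearMap.smul_apply, smul_eq_mul, map_zero,
        LinearMap.zero_apply] at this ⊢
      linarith
    · refine (Module.forall_dual_apply_eq_zero_iff ℝ _).1 (fun f => ?_) |> sub_eq_zero.1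
      have := key 0 f 0 0
      simp only [map_sub, map_add, map_smul, smul_eq_mul, map_zero,
        LinearMap.zero_apply] at this ⊢
      linarith
    · ext z
      have := key 0 0 0 z
      simp only [LinearMap.add_apply, LinearMap.smul_apply, smul_eq_mul, map_zero,
        LinearMap.zero_apply] at this ⊢
      linarith
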